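/- For a natural number q ≥ 3, define d(q) = ∏_{j=0}^{q−3} (q+j−1)(q+j) and e(q) = ∏_{j=0}^{q−3} (j+1)(j+2). Then e(q) divides d(q), and the quotient d(q)/e(q) is odd if and only if the binary expansions of q−2 and q−1 are disjoint, i.e. the bitwise AND of q−2 and q−1 equals 0. -/

import Mathlib

/-!
With `n = q - 2`, the quotient of the two products is `(2 * n + 1) * catalan n ^ 2`, so its parity
is that of the Catalan number `catalan n`, and hence that of
`(2 * n + 1).choose n = (2 * n + 1) * catalan n`. By Lucas' theorem modulo `2`, `(a + b).choose a`
is odd exactly when adding `a` and `b` in base two produces no carry; here `a = n` and `b = n + 1`.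
-/

open scoped Nat

theorem land_eq_zero_iff_div_two (a b : ℕ) :
    a &&& b = 0 ↔ (Even a ∨ Even b) ∧ a / 2 &&& b / 2 = 0 := by
  have last_bit : (a &&& b) % 2 = 0 ↔ Even a ∨ Even b := by
    grind [Nat.and_mod_two_eq_one]
  rw [← last_bit, ← Nat.and_div_two]
  lia

theorem odd_choose_add_iff_div_two (a b : ℕ) :
    Odd ((a + b).choose a) ↔ (Even a ∨ Even b) ∧ Odd ((a / 2 + b / 2).choose (a / 2)) := by
  have lucas : (a + b).choose a ≡
      ((a + b) % 2).choose (a % 2) * ((a + b) / 2).choose (a / 2) [MOD 2] :=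
    Choose.choose_modEq_choose_mod_mul_choose_div_nat
  rw [Nat.odd_iff, lucas, ← Nat.odd_iff, Nat.odd_mul]
  by_cases no_carry : Even a ∨ Even b
  · have last_digit : ((a + b) % 2).choose (a % 2) = 1 := by
      rw [Nat.even_iff, Nat.even_iff] at no_carry
      obtain ha | ha := Nat.mod_two_eq_zero_or_one a
      · rw [ha, Nat.choose_zero_right]
      · rw [ha, show (a + b) % 2 = 1 by lia, Nat.choose_self]
    have add_div_two : (a + b) / 2 = a / 2 + b / 2 := by grind
    simp [no_carry, last_digit, add_div_two]
  · have last_digit : ((a + b) % 2).choose (a % 2) = 0 :=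
      Nat.choose_eq_zero_of_lt (by grind)
    simp [no_carry, last_digit]

theorem odd_choose_add_iff_land_eq_zero (a b : ℕ) : Odd ((a + b).choose a) ↔ a &&& b = 0 := by
  induction a using Nat.strong_induction_on generalizing b with
  | _ a ih =>
    obtain rfl | ha := Nat.eq_zero_or_pos a
    · simp
    · rw [odd_choose_add_iff_div_two, land_eq_zero_iff_div_two, ih (a / 2) (by lia)]

theorem choose_two_mul_add_one_eq_mul_catalan (n : ℕ) :
    (2 * n + 1).choose n = (2 * n + 1) * catalan n := by
  refine Nat.eq_of_mul_eq_mul_right n.succ_pos ?_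
  calc (2 * n + 1).choose n * (n + 1)
      = (2 * n + 1) * (2 * n).choose n := by
        rw [← Nat.choose_symm_half, Nat.add_one_mul_choose_eq]
    _ = (2 * n + 1) * catalan n * (n + 1) := by
        rw [← Nat.centralBinom_eq_two_mul_choose, ← succ_mul_catalan_eq_centralBinom]
        ring

theorem odd_catalan_iff_land_eq_zero (n : ℕ) : Odd (catalan n) ↔ n &&& (n + 1) = 0 := by
  rw [← odd_choose_add_iff_land_eq_zero, show n + (n + 1) = 2 * n + 1 by ring,
    choose_two_mul_add_one_eq_mul_catalan, Nat.odd_mul]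
  exact (and_iff_right (odd_two_mul_add_one n)).symm

theorem prod_range_add_add_one_mul_add_add_two_eq_ascFactorial (m k : ℕ) :
    ∏ j ∈ Finset.range k, (m + j + 1) * (m + j + 2) =
      (m + 1).ascFactorial k * (m + 2).ascFactorial k := by
  simp only [Finset.prod_mul_distrib, Nat.ascFactorial_eq_prod_range, add_right_comm]

theorem prod_range_add_one_mul_add_two_eq_factorial_mul_factorial (n : ℕ) :
    ∏ j ∈ Finset.range n, (j + 1) * (j + 2) = n ! * (n + 1)! := by
  have two_ascFactorial : (2).ascFactorial n = (n + 1)! := by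
    simpa [add_comm] using Nat.factorial_mul_ascFactorial 1 n
  simpa [two_ascFactorial] using prod_range_add_add_one_mul_add_add_two_eq_ascFactorial 0 n

theorem prod_range_add_add_one_mul_add_add_two_eq_catalan (n : ℕ) :
    ∏ j ∈ Finset.range n, (n + j + 1) * (n + j + 2) =
      n ! * (n + 1)! * ((2 * n + 1) * catalan n ^ 2) := by
  calc ∏ j ∈ Finset.range n, (n + j + 1) * (n + j + 2)
      = (n ! * (n + n).choose n) * (n ! * (n + 1 + n).choose n) := by
        rw [prod_range_add_add_one_mul_add_add_two_eq_ascFactorial,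
          Nat.ascFactorial_eq_factorial_mul_choose, Nat.ascFactorial_eq_factorial_mul_choose]
    _ = (n ! * ((n + 1) * catalan n)) * (n ! * ((2 * n + 1) * catalan n)) := by
        rw [succ_mul_catalan_eq_centralBinom, Nat.centralBinom_eq_two_mul_choose,
          ← choose_two_mul_add_one_eq_mul_catalan, ← two_mul, add_right_comm, ← two_mul]
    _ = n ! * (n + 1)! * ((2 * n + 1) * catalan n ^ 2) := by
        rw [Nat.factorial_succ]
        ring

theorem degree_odd_iff_binary_disjoint (q : ℕ) (hq : 3 ≤ q) :
    (∏ j ∈ Finset.range (q - 2), (j + 1) * (j + 2)) ∣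
        (∏ j ∈ Finset.range (q - 2), (q + j - 1) * (q + j)) ∧
      (Odd ((∏ j ∈ Finset.range (q - 2), (q + j - 1) * (q + j)) /
          (∏ j ∈ Finset.range (q - 2), (j + 1) * (j + 2))) ↔
        (q - 2) &&& (q - 1) = 0) := by
  obtain ⟨n, rfl⟩ : ∃ n, q = n + 2 := ⟨q - 2, by lia⟩
  have shift_factors (j : ℕ) :
      (n + 2 + j - 1) * (n + 2 + j) = (n + j + 1) * (n + j + 2) := by
    rw [show n + 2 + j - 1 = n + j + 1 by lia, add_right_comm n 2 j]
  have quotient_odd_iff : Odd ((2 * n + 1) * catalan n ^ 2) ↔ n &&& (n + 1) = 0 := by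
    rw [Nat.odd_mul, and_iff_right (odd_two_mul_add_one n), Nat.odd_pow_iff two_ne_zero,
      odd_catalan_iff_land_eq_zero]
  simp only [shift_factors, Nat.add_sub_cancel, show n + 2 - 1 = n + 1 from rfl,
    prod_range_add_one_mul_add_two_eq_factorial_mul_factorial,
    prod_range_add_add_one_mul_add_add_two_eq_catalan]
  refine ⟨Nat.dvd_mul_right _ _, ?_⟩
  rw [Nat.mul_div_cancel_left _ (by positivity), quotient_odd_iff]
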